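/- arXiv:2307.02904 — 2 statements merged into one kernel-verified Lean document; each statement's English description precedes it below -/
import Mathlib

section
/- Let m ≥ 1 and n ≥ 0 be integers. Suppose given real numbers b_i ≤ d_i and b'_i ≤ d'_i for i = 1,…,m (matched pairs of bars), and real numbers c_j ≤ e_j for j = 1,…,n (bars matched to the diagonal). Set R := max over i of (d_i − b_i) and S := Σ_{i=1}^m (|b_i − b'_i| + |d_i − d'_i|) + Σ_{j=1}^n (e_j − c_j), and assume S ≤ 1. Define the rank functions f := Σ_{i=1}^m 1_{T(b_i,d_i)} and g := Σ_{i=1}^m 1_{T(b'_i,d'_i)} + Σ_{j=1}^n 1_{T(c_j,e_j)}. Then (∫_{ℝ²} |f − g|² dω)^{1/2} ≤ 2 · max{(2(R+1)·m)^{1/2}, 1/√2} · S^{1/2}. -/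
open MeasureTheory

/-- The triangular region `T(b,d) = {(x,y) : b ≤ x ≤ y ≤ d}` in the plane. -/
def Tri (b d : ℝ) : Set (ℝ × ℝ) := {q | b ≤ q.1 ∧ q.1 ≤ q.2 ∧ q.2 ≤ d}

/-!
By Minkowski, `‖f - g‖ₚ` is at most the sum of the `‖1_{T(bᵢ,dᵢ)} - 1_{T(b'ᵢ,d'ᵢ)}‖ₚ` and of the
`‖1_{T(cⱼ,eⱼ)}‖ₚ`. The symmetric difference of two triangles lies in two strips of widths
`|bᵢ - b'ᵢ|` and `|dᵢ - d'ᵢ|` and length at most `R + 1`, so the first sum is controlled by Hölder's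
inequality for sums. The triangle `T(cⱼ,eⱼ)` has area `(eⱼ - cⱼ)² / 2`, so the second sum is
controlled by the superadditivity of `t ↦ t ^ (2 / p)`, which is where `p ≤ 2` enters. The constant
`2 · max` comes from estimating the two sums separately.
-/

open scoped ENNReal symmDiff

section PowerSums

variable {ι : Type*} (s : Finset ι) (a : ι → ℝ≥0∞) {q : ℝ}

lemma sum_rpow_inv_le_card_rpow_mul_rpow_sum (hq : 1 ≤ q) :
    ∑ i ∈ s, a i ^ q⁻¹ ≤ (s.card : ℝ≥0∞) ^ (1 - q⁻¹) * (∑ i ∈ s, a i) ^ q⁻¹ := by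
  have hq₀ : q ≠ 0 := by positivity
  simpa [ENNReal.rpow_inv_rpow hq₀] using
    ENNReal.inner_le_weight_mul_Lp_of_nonneg s hq (fun _ ↦ 1) (fun i ↦ a i ^ q⁻¹)

lemma sum_rpow_le_rpow_sum (hq : 1 ≤ q) : ∑ i ∈ s, a i ^ q ≤ (∑ i ∈ s, a i) ^ q := by
  classical
  induction s using Finset.induction_on with
  | empty => simp
  | insert i s hi ih =>
    rw [Finset.sum_insert hi, Finset.sum_insert hi]
    exact (add_le_add_right ih _).trans (ENNReal.add_rpow_le_rpow_add _ _ hq)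

end PowerSums

section Indicators

variable {α ι : Type*} [MeasurableSpace α] {μ : Measure α} {p : ℝ≥0∞} (s : Finset ι)
  {A B : ι → Set α}

lemma eLpNorm_indicator_one {E : Set α} (hp₀ : p ≠ 0) (hp : p ≠ ∞) (hE : MeasurableSet E) :
    eLpNorm (E.indicator fun _ ↦ (1 : ℝ)) p μ = μ E ^ p.toReal⁻¹ := by
  rw [eLpNorm_indicator_const hE hp₀ hp, enorm_one, one_mul, one_div]

lemma eLpNorm_sum_indicator_le (hp1 : 1 ≤ p) (hp : p ≠ ∞) (hA : ∀ i ∈ s, MeasurableSet (A i)) :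
    eLpNorm (∑ i ∈ s, (A i).indicator fun _ ↦ (1 : ℝ)) p μ ≤ ∑ i ∈ s, μ (A i) ^ p.toReal⁻¹ := by
  have hp₀ : p ≠ 0 := (one_pos.trans_le hp1).ne'
  refine (eLpNorm_sum_le
    (fun i hi ↦ aestronglyMeasurable_const.indicator (hA i hi)) hp1).trans_eq ?_
  exact Finset.sum_congr rfl fun i hi ↦ eLpNorm_indicator_one hp₀ hp (hA i hi)

lemma eLpNorm_sum_indicator_sub_sum_indicator_le (hp1 : 1 ≤ p) (hp : p ≠ ∞)
    (hA : ∀ i ∈ s, MeasurableSet (A i)) (hB : ∀ i ∈ s, MeasurableSet (B i)) :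
    eLpNorm (∑ i ∈ s, (A i).indicator (fun _ ↦ (1 : ℝ)) -
      ∑ i ∈ s, (B i).indicator fun _ ↦ (1 : ℝ)) p μ ≤ ∑ i ∈ s, μ (A i ∆ B i) ^ p.toReal⁻¹ := by
  have hp₀ : p ≠ 0 := (one_pos.trans_le hp1).ne'
  rw [← Finset.sum_sub_distrib]
  refine (eLpNorm_sum_le (fun i hi ↦ (aestronglyMeasurable_const.indicator (hA i hi)).sub
    (aestronglyMeasurable_const.indicator (hB i hi))) hp1).trans_eq ?_
  refine Finset.sum_congr rfl fun i hi ↦ ?_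
  rw [eLpNorm_indicator_sub_indicator, eLpNorm_indicator_one hp₀ hp ((hA i hi).symmDiff (hB i hi))]

end Indicators

section Triangles

variable (b d b' d' : ℝ)

lemma measurableSet_tri : MeasurableSet (Tri b d) :=
  (measurableSet_le measurable_const measurable_fst).inter
    ((measurableSet_le measurable_fst measurable_snd).inter
      (measurableSet_le measurable_snd measurable_const))

lemma volume_preimage_mk_tri (x : ℝ) :
    volume (Prod.mk x ⁻¹' Tri b d) =
      (Set.Icc b d).indicator (fun x ↦ ENNReal.ofReal (d - x)) x := by
  by_cases hx : b ≤ x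
  · have h_section : Prod.mk x ⁻¹' Tri b d = Set.Icc x d := by
      ext y
      simp [Tri, hx]
    rw [h_section, Real.volume_Icc, Set.indicator_apply]
    split_ifs with h
    · rfl
    · exact ENNReal.ofReal_of_nonpos (by grind)
  · have h_section : Prod.mk x ⁻¹' Tri b d = ∅ := by
      ext y
      simp [Tri, hx]
    simp [h_section, hx]

lemma volume_tri : volume (Tri b d) = ENNReal.ofReal (d - b) ^ 2 / 2 := by
  rw [Measure.volume_eq_prod, Measure.prod_apply (measurableSet_tri b d)]
  simp only [volume_preimage_mk_tri]
  rw [lintegral_indicator measurableSet_Icc]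
  rcases le_total b d with hbd | hdb
  · have h_nonneg : 0 ≤ᵐ[volume.restrict (Set.Icc b d)] fun x ↦ d - x :=
      (ae_restrict_iff' measurableSet_Icc).2 (.of_forall fun _ hx ↦ sub_nonneg.2 hx.2)
    have h_integrable : IntegrableOn (fun x ↦ d - x) (Set.Icc b d) :=
      (by fun_prop : Continuous fun x ↦ d - x).integrableOn_Icc
    have h_integral : ∫ x in Set.Icc b d, (d - x) = (d - b) ^ 2 / 2 := by
      rw [integral_Icc_eq_integral_Ioc, ← intervalIntegral.integral_of_le hbd,
        intervalIntegral.integral_comp_sub_left (fun x ↦ x), integral_id]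
      ring
    rw [← ofReal_integral_eq_lintegral_ofReal h_integrable h_nonneg, h_integral,
      ENNReal.ofReal_div_of_pos two_pos, ENNReal.ofReal_pow (sub_nonneg.2 hbd),
      ENNReal.ofReal_ofNat]
  · have h_null : volume (Set.Icc b d) = 0 := by simp [hdb]
    simp [Measure.restrict_eq_zero.2 h_null, ENNReal.ofReal_of_nonpos (sub_nonpos.2 hdb)]

lemma symmDiff_tri_subset_union_strips :
    Tri b d ∆ Tri b' d' ⊆
      Set.uIcc b b' ×ˢ Set.Icc (min b b') (max d d') ∪
        Set.Icc (min b b') (max d d') ×ˢ Set.uIcc d d' := by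
  rintro ⟨x, y⟩ h
  simp only [Tri, Set.mem_symmDiff, Set.mem_ofPred_eq] at h
  simp only [Set.mem_union, Set.mem_prod, Set.mem_Icc, Set.mem_uIcc]
  grind

lemma max_sub_min_le_sub_add_abs_add_abs :
    max d d' - min b b' ≤ d - b + (|b - b'| + |d - d'|) := by
  grind

lemma volume_symmDiff_tri_le :
    volume (Tri b d ∆ Tri b' d') ≤
      ENNReal.ofReal (d - b + (|b - b'| + |d - d'|)) *
        ENNReal.ofReal (|b - b'| + |d - d'|) := by
  calc volume (Tri b d ∆ Tri b' d')
    _ ≤ volume (Set.uIcc b b' ×ˢ Set.Icc (min b b') (max d d')) +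
          volume (Set.Icc (min b b') (max d d') ×ˢ Set.uIcc d d') :=
        (measure_mono (symmDiff_tri_subset_union_strips b d b' d')).trans (measure_union_le _ _)
    _ = ENNReal.ofReal (max d d' - min b b') * ENNReal.ofReal (|b - b'| + |d - d'|) := by
        rw [Measure.volume_eq_prod, Measure.prod_prod, Measure.prod_prod, Real.volume_interval,
          Real.volume_interval, Real.volume_Icc, abs_sub_comm b' b, abs_sub_comm d' d,
          ENNReal.ofReal_add (abs_nonneg _) (abs_nonneg _)]
        ring
    _ ≤ _ := by
        gcongr
        exact max_sub_min_le_sub_add_abs_add_abs b d b' d'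

end Triangles

/-- The rank function of the persistence module with barcode `{[bᵢ, dᵢ)}`: the sum of the indicator
functions of the triangles `T(bᵢ, dᵢ)`. -/
noncomputable def rankFun {ι : Type*} [Fintype ι] (b d : ι → ℝ) : ℝ × ℝ → ℝ :=
  fun x ↦ ∑ i, (Tri (b i) (d i)).indicator (fun _ ↦ (1 : ℝ)) x

section RankFunctions

variable {ι κ : Type*} [Fintype ι] [Fintype κ] {p : ℝ≥0∞}

lemma rankFun_eq_sum (b d : ι → ℝ) :
    rankFun b d = ∑ i, (Tri (b i) (d i)).indicator (fun _ ↦ (1 : ℝ)) := by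
  ext x
  simp [rankFun]

lemma aestronglyMeasurable_rankFun (b d : ι → ℝ) : AEStronglyMeasurable (rankFun b d) := by
  rw [rankFun_eq_sum]
  exact Finset.aestronglyMeasurable_sum _ fun i _ ↦
    aestronglyMeasurable_const.indicator (measurableSet_tri _ _)

lemma eLpNorm_rankFun_sub_rankFun_le (hp1 : 1 ≤ p) (hp : p ≠ ∞) {b d b' d' : ι → ℝ} {L : ℝ}
    (hL : ∀ i, d i - b i + (|b i - b' i| + |d i - d' i|) ≤ L) :
    eLpNorm (rankFun b d - rankFun b' d') p ≤
      (Fintype.card ι : ℝ≥0∞) ^ (1 - p.toReal⁻¹) *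
        (ENNReal.ofReal L * ENNReal.ofReal (∑ i, (|b i - b' i| + |d i - d' i|))) ^ p.toReal⁻¹ := by
  have hp1' : 1 ≤ p.toReal := by simpa using ENNReal.toReal_mono hp hp1
  calc eLpNorm (rankFun b d - rankFun b' d') p volume
    _ ≤ ∑ i, volume (Tri (b i) (d i) ∆ Tri (b' i) (d' i)) ^ p.toReal⁻¹ := by
        rw [rankFun_eq_sum, rankFun_eq_sum]
        exact eLpNorm_sum_indicator_sub_sum_indicator_le _ hp1 hp
          (fun i _ ↦ measurableSet_tri _ _) (fun i _ ↦ measurableSet_tri _ _)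
    _ ≤ ∑ i, (ENNReal.ofReal L * ENNReal.ofReal (|b i - b' i| + |d i - d' i|)) ^ p.toReal⁻¹ := by
        gcongr with i
        refine (volume_symmDiff_tri_le _ _ _ _).trans ?_
        gcongr
        exact hL i
    _ ≤ _ := by
        rw [ENNReal.ofReal_sum_of_nonneg fun i _ ↦ by positivity, Finset.mul_sum]
        exact sum_rpow_inv_le_card_rpow_mul_rpow_sum _ _ hp1'

lemma eLpNorm_rankFun_le (hp1 : 1 ≤ p) (hp2 : p ≤ 2) (c e : κ → ℝ) :
    eLpNorm (rankFun c e) p ≤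
      2⁻¹ ^ p.toReal⁻¹ * (∑ j, ENNReal.ofReal (e j - c j)) ^ (2 * p.toReal⁻¹) := by
  have hp₀ : p ≠ 0 := (one_pos.trans_le hp1).ne'
  have hp : p ≠ ∞ := ne_top_of_le_ne_top ENNReal.ofNat_ne_top hp2
  have h_exponent : 1 ≤ 2 * p.toReal⁻¹ := by
    rw [← div_eq_mul_inv, one_le_div (ENNReal.toReal_pos hp₀ hp)]
    exact ENNReal.toReal_mono ENNReal.ofNat_ne_top hp2
  calc eLpNorm (rankFun c e) p volume
    _ ≤ ∑ j, volume (Tri (c j) (e j)) ^ p.toReal⁻¹ := by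
        rw [rankFun_eq_sum]
        exact eLpNorm_sum_indicator_le _ hp1 hp (fun j _ ↦ measurableSet_tri _ _)
    _ = ∑ j, 2⁻¹ ^ p.toReal⁻¹ * ENNReal.ofReal (e j - c j) ^ (2 * p.toReal⁻¹) := by
        refine Finset.sum_congr rfl fun j _ ↦ ?_
        rw [volume_tri, div_eq_mul_inv, ENNReal.mul_rpow_of_nonneg _ _ (by positivity), mul_comm,
          ENNReal.rpow_mul, ENNReal.rpow_ofNat]
    _ ≤ _ := by
        rw [← Finset.mul_sum]
        gcongr
        exact sum_rpow_le_rpow_sum _ _ h_exponent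

lemma eLpNorm_rankFun_le_of_sum_le_one (hp1 : 1 ≤ p) (hp2 : p ≤ 2) {c e : κ → ℝ}
    (h_sum : ∑ j, ENNReal.ofReal (e j - c j) ≤ 1) :
    eLpNorm (rankFun c e) p ≤
      2⁻¹ ^ p.toReal⁻¹ * (∑ j, ENNReal.ofReal (e j - c j)) ^ p.toReal⁻¹ := by
  refine (eLpNorm_rankFun_le hp1 hp2 c e).trans ?_
  rw [ENNReal.rpow_mul, ENNReal.rpow_ofNat]
  gcongr
  exact pow_le_of_le_one zero_le h_sum two_ne_zero

theorem stmt_8_general (hp1 : 1 ≤ p) (hp2 : p ≤ 2) {b d b' d' : ι → ℝ} {c e : κ → ℝ}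
    (hce : ∀ j, c j ≤ e j) {R S : ℝ} (hR : ∀ i, d i - b i ≤ R)
    (hS : ∑ i, (|b i - b' i| + |d i - d' i|) + ∑ j, (e j - c j) ≤ S) (hS1 : S ≤ 1) :
    eLpNorm (rankFun b d - (rankFun b' d' + rankFun c e)) p ≤
      2 * max ((Fintype.card ι : ℝ≥0∞) ^ (1 - p.toReal⁻¹) * ENNReal.ofReal (R + 1) ^ p.toReal⁻¹)
        (2⁻¹ ^ p.toReal⁻¹) * ENNReal.ofReal S ^ p.toReal⁻¹ := by
  have hp : p ≠ ∞ := ne_top_of_le_ne_top ENNReal.ofNat_ne_top hp2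
  have h_shift_nonneg : ∀ i, 0 ≤ |b i - b' i| + |d i - d' i| := fun i ↦ by positivity
  have h_bar_nonneg : ∀ j, 0 ≤ e j - c j := fun j ↦ sub_nonneg.2 (hce j)
  have h_matched : ∑ i, (|b i - b' i| + |d i - d' i|) ≤ S := by
    linarith [Finset.sum_nonneg fun j (_ : j ∈ Finset.univ) ↦ h_bar_nonneg j]
  have h_unmatched : ∑ j, ENNReal.ofReal (e j - c j) ≤ ENNReal.ofReal S := by
    rw [← ENNReal.ofReal_sum_of_nonneg fun j _ ↦ h_bar_nonneg j]
    gcongr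
    linarith [Finset.sum_nonneg fun i (_ : i ∈ Finset.univ) ↦ h_shift_nonneg i]
  have h_length : ∀ i, d i - b i + (|b i - b' i| + |d i - d' i|) ≤ R + 1 := fun i ↦ by
    linarith [hR i, Finset.single_le_sum (fun i _ ↦ h_shift_nonneg i) (Finset.mem_univ i)]
  calc eLpNorm (rankFun b d - (rankFun b' d' + rankFun c e)) p volume
    _ ≤ eLpNorm (rankFun b d - rankFun b' d') p + eLpNorm (rankFun c e) p := by
        rw [← sub_sub]
        exact eLpNorm_sub_le ((aestronglyMeasurable_rankFun b d).sub
          (aestronglyMeasurable_rankFun b' d')) (aestronglyMeasurable_rankFun c e) hp1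
    _ ≤ (Fintype.card ι : ℝ≥0∞) ^ (1 - p.toReal⁻¹) * ENNReal.ofReal (R + 1) ^ p.toReal⁻¹ *
            ENNReal.ofReal S ^ p.toReal⁻¹ +
          2⁻¹ ^ p.toReal⁻¹ * ENNReal.ofReal S ^ p.toReal⁻¹ := by
        grw [eLpNorm_rankFun_sub_rankFun_le hp1 hp h_length, eLpNorm_rankFun_le_of_sum_le_one
          hp1 hp2 (h_unmatched.trans (ENNReal.ofReal_le_one.2 hS1)), h_matched, h_unmatched,
          ENNReal.mul_rpow_of_nonneg _ _ (by positivity), mul_assoc]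
    _ ≤ _ := by
        rw [← add_mul, two_mul]
        gcongr
        exacts [le_max_left _ _, le_max_right _ _]

end RankFunctions

section SquareRoots

lemma lintegral_ofReal_abs_sq_rpow_half {α : Type*} [MeasurableSpace α] (μ : Measure α)
    (h : α → ℝ) :
    (∫⁻ x, ENNReal.ofReal (|h x| ^ 2) ∂μ) ^ ((1 : ℝ) / 2) = eLpNorm h 2 μ := by
  simp [eLpNorm_eq_lintegral_rpow_enorm_toReal, Real.enorm_eq_ofReal_abs,
    ← ENNReal.ofReal_pow (abs_nonneg _)]

lemma ofReal_rpow_half (x : ℝ) : ENNReal.ofReal x ^ (2⁻¹ : ℝ) = ENNReal.ofReal √x := by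
  rcases le_total 0 x with hx | hx
  · rw [ENNReal.ofReal_rpow_of_nonneg hx (by positivity), Real.sqrt_eq_rpow, one_div]
  · simp [ENNReal.ofReal_of_nonpos hx, Real.sqrt_eq_zero_of_nonpos hx]

lemma two_mul_max_rpow_half_le_ofReal (m : ℕ) (R S : ℝ) :
    2 * max ((m : ℝ≥0∞) ^ (1 - 2⁻¹ : ℝ) * ENNReal.ofReal (R + 1) ^ (2⁻¹ : ℝ))
        (2⁻¹ ^ (2⁻¹ : ℝ)) * ENNReal.ofReal S ^ (2⁻¹ : ℝ) ≤
      ENNReal.ofReal (2 * max √(2 * (R + 1) * m) (1 / √2) * √S) := by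
  have h_matched : (m : ℝ≥0∞) ^ (1 - 2⁻¹ : ℝ) * ENNReal.ofReal (R + 1) ^ (2⁻¹ : ℝ) ≤
      ENNReal.ofReal √(2 * (R + 1) * m) := by
    rw [show (1 - 2⁻¹ : ℝ) = 2⁻¹ by norm_num, ← ENNReal.ofReal_natCast,
      ← ENNReal.mul_rpow_of_nonneg _ _ (by positivity), ← ENNReal.ofReal_mul m.cast_nonneg,
      ofReal_rpow_half, mul_assoc, mul_comm (R + 1), Real.sqrt_mul zero_le_two]
    gcongr
    exact le_mul_of_one_le_left (Real.sqrt_nonneg _) (Real.one_le_sqrt.2 one_le_two)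
  have h_unmatched : (2⁻¹ : ℝ≥0∞) ^ (2⁻¹ : ℝ) = ENNReal.ofReal (1 / √2) := by
    rw [one_div, ← Real.sqrt_inv, ← ofReal_rpow_half, ENNReal.ofReal_inv_of_pos two_pos,
      ENNReal.ofReal_ofNat]
  grw [h_matched, h_unmatched, ofReal_rpow_half, ← ENNReal.ofReal_max,
    ENNReal.ofReal_mul (by positivity), ENNReal.ofReal_mul zero_le_two, ENNReal.ofReal_ofNat]

end SquareRoots

/-- 1-Wasserstein stability for rank functions, case `p = 2`: with `S ≤ 1` the
`ℓ¹` transport cost of the matching and `R` the maximum persistence of the first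
barcode, the `L²` distance between the rank functions is at most
`2 · max{(2(R+1)m)^{1/2}, 1/√2} · S^{1/2}`. -/
theorem stmt_8 (m n : ℕ) (hm : 1 ≤ m)
    (b d b' d' : Fin m → ℝ) (c e : Fin n → ℝ)
    (hbd : ∀ i, b i ≤ d i) (hbd' : ∀ i, b' i ≤ d' i) (hce : ∀ j, c j ≤ e j)
    (R S : ℝ)
    (hR : R = Finset.univ.sup' ⟨⟨0, hm⟩, Finset.mem_univ _⟩ (fun i => d i - b i))
    (hS : S = (∑ i, (|b i - b' i| + |d i - d' i|)) + ∑ j, (e j - c j))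
    (hS1 : S ≤ 1)
    (f g : ℝ × ℝ → ℝ)
    (hf : f = fun x => ∑ i, (Tri (b i) (d i)).indicator (fun _ => (1 : ℝ)) x)
    (hg : g = fun x =>
      (∑ i, (Tri (b' i) (d' i)).indicator (fun _ => (1 : ℝ)) x)
        + ∑ j, (Tri (c j) (e j)).indicator (fun _ => (1 : ℝ)) x) :
    (∫⁻ x, ENNReal.ofReal (|f x - g x| ^ 2)) ^ ((1 : ℝ) / 2)
      ≤ ENNReal.ofReal
          (2 * max (Real.sqrt (2 * (R + 1) * m)) (1 / Real.sqrt 2) * Real.sqrt S) := by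
  subst hf hg
  have h_persistence_le : ∀ i, d i - b i ≤ R := fun i ↦
    hR ▸ Finset.le_sup' (fun i ↦ d i - b i) (Finset.mem_univ i)
  have h_general := stmt_8_general one_le_two le_rfl hce h_persistence_le hS.ge hS1
  rw [Fintype.card_fin, ENNReal.toReal_ofNat] at h_general
  exact (lintegral_ofReal_abs_sq_rpow_half volume _).trans_le
    (h_general.trans (two_mul_max_rpow_half_le_ofReal m R S))
end

section
/- Let 1 ≤ p < ∞, let b ≤ d and b' ≤ d' be real numbers, and set η := max(|b − b'|, |d − d'|). If η ≤ 1, then the L^p distance between the indicator functions of the triangles T(b,d) and T(b',d') with respect to the Lebesgue measure on ℝ² satisfies (∫_{ℝ²} |1_{T(b,d)} − 1_{T(b',d')}|^p dω)^{1/p} ≤ (2(d − b + 1))^{1/p} · η^{1/p}. -/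
open MeasureTheory

/-!
For bars of lengths `ℓ` and `ℓ'` at distance `η`, the triangles `T(b,d)` and `T(b',d')` meet in the
triangle `T(max b b', min d d')`, whose leg `m` is at least `s - η`, where `s = (ℓ + ℓ') / 2`. With
`δ = (ℓ - ℓ') / 2`, so that `|δ| ≤ min s η`, the symmetric difference has area
`(ℓ² + ℓ'²) / 2 - m² = s² + δ² - m²`. This is at most `2sη`: if `s ≤ η` because `s² + δ² ≤ 2s²`,
and otherwise because `δ² ≤ η²` and `s² - m² ≤ s² - (s - η)² = 2sη - η²`. Finally `ℓ' ≤ ℓ + 2η`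
gives `2sη ≤ 2(ℓ + η)η`, and the `p`-th power of the `L^p` distance between two indicator functions
is the measure of the symmetric difference of the sets.
-/

open scoped symmDiff

section SymmDiff

variable {α : Type*} [MeasurableSpace α] {μ : Measure α} {s t : Set α}

lemma lintegral_abs_indicator_sub_indicator_rpow (hs : MeasurableSet s) (ht : MeasurableSet t)
    {p : ℝ} (hp : p ≠ 0) :
    ∫⁻ x, ENNReal.ofReal (|s.indicator (fun _ => (1 : ℝ)) x - t.indicator (fun _ => 1) x| ^ p) ∂μ
      = μ (s ∆ t) := by
  rw [← lintegral_indicator_one (hs.symmDiff ht)]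
  congr with x
  by_cases hxs : x ∈ s <;> by_cases hxt : x ∈ t <;> simp [Set.mem_symmDiff, hxs, hxt, hp]

lemma measureReal_symmDiff_eq_add_sub_inter (hs : MeasurableSet s) (ht : MeasurableSet t)
    (hμs : μ s ≠ ⊤) (hμt : μ t ≠ ⊤) :
    μ.real (s ∆ t) = μ.real s + μ.real t - 2 * μ.real (s ∩ t) := by
  have hst := measureReal_sdiff_add_inter (s := s) ht hμs
  have hts := measureReal_sdiff_add_inter (s := t) hs hμt
  rw [Set.inter_comm] at hts
  rw [measureReal_symmDiff_eq hs ht hμs hμt]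
  linarith

end SymmDiff

section Estimates

variable {K : Type*} [Field K] [LinearOrder K] [IsStrictOrderedRing K]

lemma half_sq_add_sq_sub_sq_le {x y m η : K} (hx : 0 ≤ x) (hy : 0 ≤ y)
    (hxy : |x - y| ≤ 2 * η) (hmη : (x + y) / 2 - η ≤ m) :
    (x ^ 2 + y ^ 2) / 2 - m ^ 2 ≤ (x + y) * η := by
  rcases le_total ((x + y) / 2) η with hle | hle
  · calc (x ^ 2 + y ^ 2) / 2 - m ^ 2 ≤ (x + y) * ((x + y) / 2) := by
          linarith [mul_nonneg hx hy, sq_nonneg m]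
      _ ≤ (x + y) * η := by gcongr
  · have hsq_m : ((x + y) / 2 - η) ^ 2 ≤ m ^ 2 := by gcongr
    have hsq_sub : (x - y) ^ 2 ≤ (2 * η) ^ 2 := sq_le_sq.2 (hxy.trans (le_abs_self _))
    linarith

lemma half_add_sub_max_le_min_sub_max (b d b' d' : K) :
    ((d - b) + (d' - b')) / 2 - max |b - b'| |d - d'| ≤ min d d' - max b b' := by
  have hb : max b b' ≤ (b + b' + |b - b'|) / 2 := by grind
  have hd : (d + d' - |d - d'|) / 2 ≤ min d d' := by grind
  have hbη := le_max_left |b - b'| |d - d'|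
  have hdη := le_max_right |b - b'| |d - d'|
  linarith

lemma abs_sub_sub_sub_le_two_mul_max (b d b' d' : K) :
    |(d - b) - (d' - b')| ≤ 2 * max |b - b'| |d - d'| :=
  calc |(d - b) - (d' - b')| = |(d - d') - (b - b')| := by ring_nf
    _ ≤ |d - d'| + |b - b'| := abs_sub _ _
    _ ≤ 2 * max |b - b'| |d - d'| := by
      linarith [le_max_left |b - b'| |d - d'|, le_max_right |b - b'| |d - d'|]

lemma half_posPart_add_posPart_sub_le {x y m η : K} (hxy : |x - y| ≤ 2 * η)
    (hmη : (x + y) / 2 - η ≤ m) : (x⁺ + y⁺) / 2 - η ≤ m⁺ := by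
  simp only [posPart_def]
  grind

end Estimates

lemma measurableSet_Tri (b d : ℝ) : MeasurableSet (Tri b d) :=
  (measurableSet_le measurable_const measurable_fst).inter <|
    (measurableSet_le measurable_fst measurable_snd).inter <|
      measurableSet_le measurable_snd measurable_const

lemma Tri_inter_Tri (b d b' d' : ℝ) : Tri b d ∩ Tri b' d' = Tri (max b b') (min d d') := by
  ext q
  simp only [Tri, Set.mem_inter_iff, Set.mem_ofPred_eq, max_le_iff, le_min_iff]
  tauto

lemma Tri_eq_empty {b d : ℝ} (h : d < b) : Tri b d = ∅ :=
  Set.eq_empty_of_forall_notMem fun _ ⟨hb, hle, hd⟩ => (hb.trans (hle.trans hd)).not_gt h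

lemma volume_preimage_mk_Tri (b d x : ℝ) :
    volume (Prod.mk x ⁻¹' Tri b d)
      = (Set.Icc b d).indicator (fun x => ENNReal.ofReal (d - x)) x := by
  have hslice : Prod.mk x ⁻¹' Tri b d = {_y | b ≤ x} ∩ Set.Icc x d := rfl
  by_cases hb : b ≤ x <;> by_cases hd : x ≤ d <;> simp [hslice, hb, hd]

lemma integral_const_sub_id (b d : ℝ) : ∫ x in b..d, (d - x) = (d - b) ^ 2 / 2 := by
  simp [intervalIntegral.integral_comp_sub_left (fun x => x) d]

lemma volume_Tri (b d : ℝ) : volume (Tri b d) = ENNReal.ofReal ((d - b)⁺ ^ 2 / 2) := by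
  rcases lt_or_ge d b with hdb | hbd
  · simp [Tri_eq_empty hdb, posPart_eq_zero.2 (sub_nonpos.2 hdb.le)]
  have hnonneg : 0 ≤ᵐ[volume.restrict (Set.Icc b d)] fun x => d - x := by
    filter_upwards [ae_restrict_mem measurableSet_Icc] with x hx using sub_nonneg.2 hx.2
  have hint : IntegrableOn (fun x => d - x) (Set.Icc b d) :=
    (continuous_const.sub continuous_id).integrableOn_Icc
  calc volume (Tri b d) = ∫⁻ x, volume (Prod.mk x ⁻¹' Tri b d) :=
        Measure.prod_apply (measurableSet_Tri b d)
    _ = ∫⁻ x in Set.Icc b d, ENNReal.ofReal (d - x) := by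
        simp only [volume_preimage_mk_Tri, lintegral_indicator measurableSet_Icc]
    _ = ENNReal.ofReal (∫ x in b..d, (d - x)) := by
        rw [← ofReal_integral_eq_lintegral_ofReal hint hnonneg, integral_Icc_eq_integral_Ioc,
          ← intervalIntegral.integral_of_le hbd]
    _ = ENNReal.ofReal ((d - b)⁺ ^ 2 / 2) := by
        rw [integral_const_sub_id, posPart_of_nonneg (sub_nonneg.2 hbd)]

lemma volume_Tri_ne_top (b d : ℝ) : volume (Tri b d) ≠ ⊤ := by
  simp [volume_Tri]

lemma volumeReal_Tri (b d : ℝ) : volume.real (Tri b d) = (d - b)⁺ ^ 2 / 2 := by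
  rw [measureReal_def, volume_Tri, ENNReal.toReal_ofReal (by positivity)]

lemma volumeReal_symmDiff_Tri (b d b' d' : ℝ) :
    volume.real (Tri b d ∆ Tri b' d')
      = ((d - b)⁺ ^ 2 + (d' - b')⁺ ^ 2) / 2 - (min d d' - max b b')⁺ ^ 2 := by
  rw [measureReal_symmDiff_eq_add_sub_inter (measurableSet_Tri b d) (measurableSet_Tri b' d')
    (volume_Tri_ne_top b d) (volume_Tri_ne_top b' d'), Tri_inter_Tri]
  simp only [volumeReal_Tri]
  ring

lemma volumeReal_symmDiff_Tri_le (b d b' d' : ℝ) :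
    volume.real (Tri b d ∆ Tri b' d')
      ≤ ((d - b)⁺ + (d' - b')⁺) * max |b - b'| |d - d'| := by
  have hlen := abs_sub_sub_sub_le_two_mul_max b d b' d'
  have hlen_pos : |(d - b)⁺ - (d' - b')⁺| ≤ 2 * max |b - b'| |d - d'| :=
    (abs_max_sub_max_le_abs _ _ _).trans hlen
  have hinter := half_posPart_add_posPart_sub_le hlen (half_add_sub_max_le_min_sub_max b d b' d')
  rw [volumeReal_symmDiff_Tri]
  exact half_sq_add_sq_sub_sq_le (posPart_nonneg _) (posPart_nonneg _) hlen_pos hinter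

lemma volume_symmDiff_Tri_le {b d : ℝ} (h : b ≤ d) (b' d' : ℝ) :
    volume (Tri b d ∆ Tri b' d')
      ≤ ENNReal.ofReal (2 * (d - b + max |b - b'| |d - d'|) * max |b - b'| |d - d'|) := by
  have hfin := measure_symmDiff_ne_top (volume_Tri_ne_top b d) (volume_Tri_ne_top b' d')
  have hlen : (d - b)⁺ = d - b := posPart_of_nonneg (sub_nonneg.2 h)
  have hlen' : (d' - b')⁺ ≤ d - b + 2 * max |b - b'| |d - d'| :=
    max_le (by linarith [abs_le.1 (abs_sub_sub_sub_le_two_mul_max b d b' d')])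
      (add_nonneg (sub_nonneg.2 h) (by positivity))
  rw [← ofReal_measureReal hfin]
  refine ENNReal.ofReal_le_ofReal ((volumeReal_symmDiff_Tri_le b d b' d').trans ?_)
  gcongr
  linarith

theorem stmt_9_general {p : ℝ} (hp : 0 < p) {b d : ℝ} (h : b ≤ d) (b' d' : ℝ) :
    (∫⁻ x, ENNReal.ofReal
        (|(Tri b d).indicator (fun _ => (1 : ℝ)) x
          - (Tri b' d').indicator (fun _ => (1 : ℝ)) x| ^ p)) ^ (1 / p)
      ≤ ENNReal.ofReal
          ((2 * (d - b + max |b - b'| |d - d'|)) ^ (1 / p)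
            * (max |b - b'| |d - d'|) ^ (1 / p)) := by
  have hη : 0 ≤ max |b - b'| |d - d'| := by positivity
  have hcoef : 0 ≤ 2 * (d - b + max |b - b'| |d - d'|) := by linarith
  rw [lintegral_abs_indicator_sub_indicator_rpow (measurableSet_Tri b d)
      (measurableSet_Tri b' d') hp.ne', ← Real.mul_rpow hcoef hη,
    ← ENNReal.ofReal_rpow_of_nonneg (mul_nonneg hcoef hη) (by positivity)]
  gcongr
  exact volume_symmDiff_Tri_le h _ _

/-- Per-bar estimate: for `1 ≤ p < ∞` and `η = max(|b − b'|, |d − d'|) ≤ 1`, the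
`L^p` distance between the indicator functions of `T(b,d)` and `T(b',d')` is at
most `(2(d − b + 1))^{1/p} · η^{1/p}`. -/
theorem stmt_9 (p : ℝ) (hp : 1 ≤ p) (b d b' d' : ℝ) (h : b ≤ d) (h' : b' ≤ d')
    (hη : max |b - b'| |d - d'| ≤ 1) :
    (∫⁻ x, ENNReal.ofReal
        (|(Tri b d).indicator (fun _ => (1 : ℝ)) x
          - (Tri b' d').indicator (fun _ => (1 : ℝ)) x| ^ p)) ^ (1 / p)
      ≤ ENNReal.ofReal
          ((2 * (d - b + 1)) ^ (1 / p) * (max |b - b'| |d - d'|) ^ (1 / p)) := by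
  refine (stmt_9_general (one_pos.trans_le hp) h b' d').trans (ENNReal.ofReal_le_ofReal ?_)
  have := sub_nonneg.2 h
  gcongr
end
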